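/- Let A be a tame central arrangement of n hyperplanes with rank ℓ in ℂ^m, for which the logarithmic complex 0 → D_ℓ^{S/C}(A)[0,−ℓ] → ⋯ → D_1^{S/C}(A)[0,−1] → D_0^{S/C}(A) → S/I(A) → 0 (with differential contraction along ω_a) is exact. Then the bigraded Hilbert series satisfies h(S/I; t, u) = P_A(t, −u)/(1−u)^n, where P_A(x, y) = Σ_{p=0}^{m} h(D_p(A); x) y^p. -/

import Mathlib

/- STATEMENT 15: for a (tame) central essential arrangement A of n hyperplanes
in ℂ^m for which the logarithmic complex
  0 → D_m^{S/C}(A)[0,−m] → ⋯ → D_1^{S/C}(A)[0,−1] → D_0^{S/C}(A) → S/I(A) → 0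
is exact, the bigraded Hilbert series satisfies
  h(S/I; t, u) = P_A(t, −u)/(1−u)^n,  P_A(x,y) = Σ_p h(D_p(A); x) y^p.
Formalization: D_p(A) is the module of logarithmic p-derivations (alternating
ℂ-multilinear maps R^p → R, Leibniz in each slot, with θ(f,g₂,…,g_p) ∈ (f));
D_p^{S/C} = D_p(A) ⊗ C.  Exactness is the hypothesis: in each bidegree (d,e)
there are linear maps making the sequence of (finite-dimensional) graded pieces
exact.  The conclusion is the coefficientwise form of the series identity:
  dim (S/I)_{(d,e)} = Σ_{p=0}^{m} (−1)^p · dim D_p(A)_d · dim C_{e−p}. -/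

open MvPolynomial

noncomputable section

variable (m n : ℕ)

abbrev Rm (m : ℕ) := MvPolynomial (Fin m) ℂ
abbrev Smn (m n : ℕ) := MvPolynomial (Fin m ⊕ Fin n) ℂ
abbrev Cn (n : ℕ) := MvPolynomial (Fin n) ℂ

/-- `θ` is a `p`-derivation: Leibniz rule in every slot. -/
def IsMultiDeriv {p : ℕ} (θ : AlternatingMap ℂ (Rm m) (Rm m) (Fin p)) : Prop :=
  ∀ (v : Fin p → Rm m) (i : Fin p) (a b : Rm m),
    θ (Function.update v i (a * b)) =
      a * θ (Function.update v i b) + b * θ (Function.update v i a)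

/-- The degree-`d` graded piece of the module `D_p(A)` of logarithmic
`p`-derivations of the arrangement with defining polynomial `f` (grading
normalized so that the Euler derivation has degree 0). -/
def DpPiece (f : Rm m) (p d : ℕ) :
    Submodule ℂ (AlternatingMap ℂ (Rm m) (Rm m) (Fin p)) where
  carrier := {θ | IsMultiDeriv m θ ∧
    (∀ (g : Fin p → Rm m) (i : Fin p), θ (Function.update g i f) ∈ Ideal.span {f}) ∧
    ∀ μ : Fin p → (Fin m →₀ ℕ),
      (θ fun i => monomial (μ i) 1).IsHomogeneous ((∑ i, (μ i).sum fun _ k => k) + d)}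
  zero_mem' := by
    refine ⟨fun v i a b => by simp, fun g i => by simp, fun μ => by
      simpa using MvPolynomial.isHomogeneous_zero _ _ _⟩
  add_mem' := by
    rintro a b ⟨ha1, ha2, ha3⟩ ⟨hb1, hb2, hb3⟩
    refine ⟨fun v i x y => ?_, fun g i => ?_, fun μ => ?_⟩
    · simp only [AlternatingMap.add_apply, ha1 v i x y, hb1 v i x y]; ring
    · simpa [AlternatingMap.add_apply] using Ideal.add_mem _ (ha2 g i) (hb2 g i)
    · simpa [AlternatingMap.add_apply] using (ha3 μ).add (hb3 μ)
  smul_mem' := by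
    rintro c θ ⟨h1, h2, h3⟩
    refine ⟨fun v i x y => ?_, fun g i => ?_, fun μ => ?_⟩
    · simp only [AlternatingMap.smul_apply, h1 v i x y, smul_add, mul_smul_comm]
    · simpa [AlternatingMap.smul_apply] using
        Submodule.smul_of_tower_mem (Ideal.span {f}) c (h2 g i)
    · simpa [AlternatingMap.smul_apply, MvPolynomial.smul_eq_C_mul] using
        (MvPolynomial.isHomogeneous_C (Fin m) c).mul (h3 μ)

/-- The graded piece of `C = ℂ[a₁,…,a_n]` in (possibly negative) degree `k`. -/
def CPiece (k : ℤ) : Submodule ℂ (Cn n) :=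
  if 0 ≤ k then homogeneousSubmodule (Fin n) ℂ k.toNat else ⊥

/-- The logarithmic ideal `I(A) ⊆ S`, generated by the contractions
`⟨θ, ω_a⟩ = Σᵢ aᵢ qᵢ` for derivations `θ` in the `x`-variables with
`θ(fᵢ) = qᵢ fᵢ`. -/
def logIdeal (f : Fin n → Rm m) : Ideal (Smn m n) :=
  Ideal.span {p : Smn m n | ∃ θ : Derivation ℂ (Smn m n) (Smn m n),
    (∀ j : Fin n, θ (X (Sum.inr j)) = 0) ∧
    ∃ q : Fin n → Smn m n,
      (∀ i, θ (rename Sum.inl (f i)) = q i * rename Sum.inl (f i)) ∧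
      p = ∑ i, X (Sum.inr i) * q i}

/-- The bigrading of `S`: `x`-variables have bidegree (1,0), `a`-variables
bidegree (0,1). -/
def wS : Fin m ⊕ Fin n → ℕ × ℕ := Sum.elim (fun _ => (1, 0)) (fun _ => (0, 1))

/-- The bigraded piece of `S/I(A)` in bidegree `(d,e)`. -/
def SIPiece (f : Fin n → Rm m) (d e : ℕ) :
    Submodule ℂ (Smn m n ⧸ logIdeal m n f) :=
  Submodule.map (Ideal.Quotient.mkₐ ℂ (logIdeal m n f)).toLinearMap
    (weightedHomogeneousSubmodule ℂ (wS m n) (d, e))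

/-- The bidegree-`(d,e)` piece of `D_p^{S/C}(A)[0,−p] = (D_p(A) ⊗ C)[0,−p]`,
namely `D_p(A)_d ⊗ C_{e−p}`. -/
def WPiece (f : Rm m) (p d e : ℕ) : Type :=
  TensorProduct ℂ (DpPiece m f p d) (CPiece n ((e : ℤ) - p))

instance (f : Rm m) (p d e : ℕ) : AddCommMonoid (WPiece m n f p d e) := by
  unfold WPiece; infer_instance

instance (f : Rm m) (p d e : ℕ) : Module ℂ (WPiece m n f p d e) := by
  unfold WPiece; infer_instance

/-!
In a fixed bidegree the logarithmic complex is an exact sequence of finite-dimensional vector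
spaces, so the alternating sum of dimensions is zero. A multiderivation of a polynomial ring is
determined by its values on tuples of coordinates. For a logarithmic `p`-derivation of degree `d`
these values are homogeneous of degree `p + d`, which bounds the dimension; if `p > m`, every
`p`-tuple of coordinates has a repetition and the alternating map vanishes, so that the complex
stops at `p = m`.
-/

section EulerCharacteristic

variable {K V : Type*} {W : ℕ → Type*} [DivisionRing K] [AddCommGroup V] [Module K V]
  [∀ p, AddCommMonoid (W p)] [∀ p, Module K (W p)] [∀ p, Module.Finite K (W p)]
  {N : ℕ} {δ : ∀ p, W (p + 1) →ₗ[K] W p} {ε : W 0 →ₗ[K] V}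

theorem sum_neg_one_pow_finrank_eq_add_finrank_range_of_exact (hε : Function.Surjective ε)
    (hδε : Function.Exact (δ 0) ε) (hδ : ∀ p < N, Function.Exact (δ (p + 1)) (δ p)) :
    ∑ p ∈ Finset.range (N + 1), (-1) ^ p * (Module.finrank K (W p) : ℤ) =
      Module.finrank K V + (-1) ^ N * Module.finrank K (δ N).range := by
  let (p : ℕ) : AddCommGroup (W p) := Module.addCommMonoidToAddCommGroup K
  induction N with
  | zero =>
    have rank_nullity := ε.finrank_range_add_finrank_ker
    rw [hδε.linearMap_ker_eq, LinearMap.range_eq_top.2 hε, finrank_top] at rank_nullity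
    simp [← rank_nullity]
  | succ N ih =>
    have rank_nullity := (δ N).finrank_range_add_finrank_ker
    rw [(hδ N N.lt_succ_self).linearMap_ker_eq] at rank_nullity
    rw [Finset.sum_range_succ, ih fun p hp => hδ p (hp.trans N.lt_succ_self), ← rank_nullity]
    push_cast
    ring

theorem finrank_eq_sum_neg_one_pow_finrank_of_exact [Subsingleton (W (N + 1))]
    (hε : Function.Surjective ε) (hδε : Function.Exact (δ 0) ε)
    (hδ : ∀ p < N, Function.Exact (δ (p + 1)) (δ p)) :
    (Module.finrank K V : ℤ) =
      ∑ p ∈ Finset.range (N + 1), (-1) ^ p * (Module.finrank K (W p) : ℤ) := by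
  have range_eq_bot : (δ N).range = ⊥ := by
    rw [Subsingleton.elim (δ N) 0, LinearMap.range_zero]
  rw [sum_neg_one_pow_finrank_eq_add_finrank_range_of_exact hε hδε hδ, range_eq_bot, finrank_bot]
  simp

end EulerCharacteristic

section MultiDerivation

variable {m} {p : ℕ} {θ : AlternatingMap ℂ (Rm m) (Rm m) (Fin p)}

/-- The derivation obtained from a `p`-derivation by freezing all arguments but the `i`-th. The
value `v i` is irrelevant. -/
def IsMultiDeriv.toDerivation (hθ : IsMultiDeriv m θ) (v : Fin p → Rm m) (i : Fin p) :
    Derivation ℂ (Rm m) (Rm m) :=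
  Derivation.mk' (θ.toMultilinearMap.toLinearMap v i) (hθ v i)

theorem IsMultiDeriv.toDerivation_apply (hθ : IsMultiDeriv m θ) (v : Fin p → Rm m) (i : Fin p)
    (a : Rm m) : hθ.toDerivation v i a = θ (Function.update v i a) :=
  rfl

theorem IsMultiDeriv.eq_zero_of_forall_X (hθ : IsMultiDeriv m θ)
    (hX : ∀ σ : Fin p → Fin m, θ (fun i => X (σ i)) = 0) : θ = 0 := by
  -- Release the arguments from being coordinates one slot at a time.
  have vanish_off (s : Finset (Fin p)) :
      ∀ v : Fin p → Rm m, (∀ k ∉ s, ∃ j, v k = X j) → θ v = 0 := by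
    induction s using Finset.induction_on with
    | empty =>
      intro v hv
      choose σ hσ using fun k => hv k (Finset.notMem_empty k)
      rw [funext hσ, hX σ]
    | insert i s _ ih =>
      intro v hv
      have toDerivation_eq_zero : hθ.toDerivation v i = 0 := by
        refine derivation_ext fun j => ih (Function.update v i (X j)) fun k hk => ?_
        obtain rfl | hki := eq_or_ne k i
        · exact ⟨j, Function.update_self ..⟩
        · simpa only [Function.update_of_ne hki] using hv k (by simp [hki, hk])
      calc θ v = hθ.toDerivation v i (v i) := by
            rw [hθ.toDerivation_apply, Function.update_eq_self]
        _ = 0 := by rw [toDerivation_eq_zero, Derivation.zero_apply]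
  ext1 v
  exact vanish_off Finset.univ v fun k hk => absurd (Finset.mem_univ k) hk

end MultiDerivation

section GradedPieces

variable {m n} (g : Rm m) (p d e : ℕ)

/-- The coefficients of a logarithmic `p`-derivation of degree `d` in terms of the `∂ᵢ`, read off as
its values on `p`-tuples of coordinates. They are homogeneous of degree `p + d`, not `d`, because
the Euler derivation has degree 0. -/
def DpPiece.coeff :
    DpPiece m g p d →ₗ[ℂ] (Fin p → Fin m) → homogeneousSubmodule (Fin m) ℂ (p + d) where
  toFun θ σ := ⟨θ.1 fun i => X (σ i), by simpa [X] using θ.2.2.2 fun i => Finsupp.single (σ i) 1⟩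
  map_add' _ _ := rfl
  map_smul' _ _ := rfl

theorem DpPiece.coeff_injective : Function.Injective (DpPiece.coeff g p d) := by
  refine (injective_iff_map_eq_zero _).2 fun θ hθ => Subtype.ext ?_
  exact IsMultiDeriv.eq_zero_of_forall_X θ.2.1 fun σ => congrArg Subtype.val (congrFun hθ σ)

instance DpPiece.instFinite : Module.Finite ℂ (DpPiece m g p d) :=
  have : Module.Finite ℂ (homogeneousSubmodule (Fin m) ℂ (p + d)) :=
    .of_fg (homogeneousSubmodule_fg _ _ _)
  .of_injective _ (DpPiece.coeff_injective g p d)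

variable {p} in
theorem DpPiece.subsingleton_of_lt (hp : m < p) : Subsingleton (DpPiece m g p d) := by
  refine subsingleton_of_forall_eq 0 fun θ => DpPiece.coeff_injective g p d ?_
  refine funext fun σ => Subtype.ext (θ.1.map_eq_zero_of_not_injective _ fun hσ => ?_)
  have : p ≤ m := by
    simpa using Fintype.card_le_of_injective σ (Function.Injective.of_comp (f := X) hσ)
  exact this.not_gt hp

instance CPiece.instFinite (k : ℤ) : Module.Finite ℂ (CPiece n k) := by
  refine .of_fg ?_
  unfold CPiece
  split_ifs
  · exact homogeneousSubmodule_fg _ _ _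
  · exact Submodule.fg_bot

variable (n) in
/-- The identification of `WPiece` with the tensor product that defines it. -/
def WPiece.equivTensorProduct :
    WPiece m n g p d e ≃ₗ[ℂ] TensorProduct ℂ (DpPiece m g p d) (CPiece n ((e : ℤ) - p)) :=
  LinearEquiv.refl ℂ (TensorProduct ℂ (DpPiece m g p d) (CPiece n ((e : ℤ) - p)))

instance WPiece.instFinite : Module.Finite ℂ (WPiece m n g p d e) :=
  .equiv (WPiece.equivTensorProduct n g p d e).symm

theorem WPiece.finrank_eq :
    Module.finrank ℂ (WPiece m n g p d e) =
      Module.finrank ℂ (DpPiece m g p d) * Module.finrank ℂ (CPiece n ((e : ℤ) - p)) := by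
  -- Needed for `Module.Free`: synthesis finds no group structure extending the given monoid one.
  let _ : AddCommGroup (DpPiece m g p d) := Module.addCommMonoidToAddCommGroup ℂ
  rw [(WPiece.equivTensorProduct n g p d e).finrank_eq, Module.finrank_tensorProduct]

variable {p} in
theorem WPiece.subsingleton_of_lt (hp : m < p) : Subsingleton (WPiece m n g p d e) :=
  have := DpPiece.subsingleton_of_lt g d hp
  (WPiece.equivTensorProduct n g p d e).injective.subsingleton

end GradedPieces

theorem hilbert_series_of_exact_log_complex_general {m n : ℕ} (f : Fin n → Rm m) {d e : ℕ}
    {δ : ∀ p : ℕ, WPiece m n (∏ i, f i) (p + 1) d e →ₗ[ℂ] WPiece m n (∏ i, f i) p d e}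
    {ε : WPiece m n (∏ i, f i) 0 d e →ₗ[ℂ] SIPiece m n f d e}
    (hε : Function.Surjective ε) (hδε : Function.Exact (δ 0) ε)
    (hδ : ∀ p < m, Function.Exact (δ (p + 1)) (δ p)) :
    (Module.finrank ℂ (SIPiece m n f d e) : ℤ) =
      ∑ p ∈ Finset.range (m + 1),
        (-1) ^ p * (Module.finrank ℂ (DpPiece m (∏ i, f i) p d) : ℤ) *
          (Module.finrank ℂ (CPiece n ((e : ℤ) - p)) : ℤ) := by
  have : Subsingleton (WPiece m n (∏ i, f i) (m + 1) d e) :=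
    WPiece.subsingleton_of_lt _ d e m.lt_succ_self
  rw [finrank_eq_sum_neg_one_pow_finrank_of_exact
    (W := fun p => WPiece m n (∏ i, f i) p d e) hε hδε hδ]
  simp only [WPiece.finrank_eq, Nat.cast_mul, mul_assoc]

/-- If the logarithmic complex is exact (as paper's Cor. 4.9: A tame), then
`h(S/I; t, u) = P_A(t, −u)/(1−u)^n`, coefficientwise. -/
theorem hilbert_series_of_exact_log_complex
    (f : Fin n → Rm m)
    (hf1 : ∀ i, (f i).IsHomogeneous 1) (hf0 : ∀ i, f i ≠ 0)
    (hess : Module.finrank ℂ (Submodule.span ℂ (Set.range f)) = m)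
    -- exactness of the logarithmic complex in each bidegree (d,e):
    (hexact : ∀ d e : ℕ,
      ∃ (δ : ∀ p : ℕ, WPiece m n (∏ i, f i) (p + 1) d e →ₗ[ℂ]
              WPiece m n (∏ i, f i) p d e)
        (ε : WPiece m n (∏ i, f i) 0 d e →ₗ[ℂ] SIPiece m n f d e),
        Function.Surjective ε ∧ Function.Exact (δ 0) ε ∧
        (∀ p, Function.Exact (δ (p + 1)) (δ p)) ∧
        ∀ p, m < p → Subsingleton (WPiece m n (∏ i, f i) p d e)) :
    ∀ d e : ℕ,
      (Module.finrank ℂ (SIPiece m n f d e) : ℤ) =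
        ∑ p ∈ Finset.range (m + 1),
          (-1) ^ p * (Module.finrank ℂ (DpPiece m (∏ i, f i) p d) : ℤ) *
            (Module.finrank ℂ (CPiece n ((e : ℤ) - p)) : ℤ) := by
  intro d e
  obtain ⟨_, _, hε, hδε, hδ, _⟩ := hexact d e
  exact hilbert_series_of_exact_log_complex_general f hε hδε fun p _ => hδ p
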